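/- Let f be a binary constraint with f not identically zero. Then f ∉ IM ∪ NZ if and only if f(0,0)·f(1,1) = 0 and f(0,1)·f(1,0) ≠ 0. -/

import Mathlib

/-- A (complex-valued Boolean) constraint of arity `k`. -/
abbrev Constraint (k : ℕ) : Type := (Fin k → Bool) → ℂ

/-- The binary equality constraint `EQ = [1,0,1]`, as a two-argument function. -/
def EQc : Bool → Bool → ℂ := fun a b => if a = b then 1 else 0

/-- The binary disequality constraint `XOR = [0,1,0]`, as a two-argument function. -/
def XORc : Bool → Bool → ℂ := fun a b => if a = b then 0 else 1

/-- The binary constraint `Implies = (1,1,0,1)`, as a two-argument function. -/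
def IMPc : Bool → Bool → ℂ := fun a b => if a = true ∧ b = false then 0 else 1

/-- The unary constraint `[a, b]` (value `a` on input `0`, value `b` on input `1`). -/
def unC (a b : ℂ) : Constraint 1 := fun x => if x 0 then b else a

/-- The binary constraint `(a,b,c,d) = (f(0,0), f(0,1), f(1,0), f(1,1))`. -/
def binC (a b c d : ℂ) : Constraint 2 := fun x =>
  if x 0 then (if x 1 then d else c) else (if x 1 then b else a)

/-- `OR = [0,1,1]`. -/
def ORc : Constraint 2 := binC 0 1 1 1

/-- `Implies = (1,1,0,1)` as a binary constraint. -/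
def Impliesc : Constraint 2 := binC 1 1 0 1

/-- Membership in `NZ`: the constraint is everywhere nonzero. -/
def inNZ {k : ℕ} (f : Constraint k) : Prop := ∀ x, f x ≠ 0

/-- Membership in `DG`: the constraint is a product of unary constraints, one per variable. -/
def inDG {k : ℕ} (f : Constraint k) : Prop :=
  ∃ g : Fin k → Bool → ℂ, ∀ x, f x = ∏ i, g i (x i)

/-- Membership in `ED`: the constraint is a product of at least one factor, each factor
being a unary constraint applied to some variable, or `EQ`/`XOR` applied to two variables. -/
def inED {k : ℕ} (f : Constraint k) : Prop :=
  ∃ (l1 l2 : ℕ) (h : Fin l1 → Bool → ℂ) (j : Fin l1 → Fin k)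
    (g : Fin l2 → Bool → Bool → ℂ) (m n : Fin l2 → Fin k),
    1 ≤ l1 + l2 ∧ (∀ i, g i = EQc ∨ g i = XORc) ∧
    ∀ x, f x = (∏ i, h i (x (j i))) * ∏ i, g i (x (m i)) (x (n i))

/-- Membership in `IM`: `f ∉ NZ` and `f` is a product of at least one factor, each factor
being a unary constraint applied to some variable, or `Implies` applied to two variables. -/
def inIM {k : ℕ} (f : Constraint k) : Prop :=
  ¬ inNZ f ∧
  ∃ (l1 l2 : ℕ) (h : Fin l1 → Bool → ℂ) (j : Fin l1 → Fin k)
    (m n : Fin l2 → Fin k),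
    1 ≤ l1 + l2 ∧
    ∀ x, f x = (∏ i, h i (x (j i))) * ∏ i, IMPc (x (m i)) (x (n i))

/-- The underlying relation `R_f = {x : f x ≠ 0}` of a constraint `f`. -/
def relOf {k : ℕ} (f : Constraint k) : Set (Fin k → Bool) := {x | f x ≠ 0}

/-- Factors allowed in an IMP-style factorization of a relation:
`Δ_c(x_i)` or `Implies(x_i, x_j)`. -/
inductive ImpFactor (k : ℕ) where
  | delta (c : Bool) (i : Fin k)
  | imp (i j : Fin k)
deriving DecidableEq

/-- Evaluation of an IMP-factor at an assignment. -/
def ImpFactor.eval {k : ℕ} : ImpFactor k → (Fin k → Bool) → Bool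
  | .delta c i, x => x i == c
  | .imp i j, x => !(x i) || x j

/-- `L` is a factor list for the relation `R`: the conjunction of the factors in `L` equals `R`. -/
def isFactorListFor {k : ℕ} (L : List (ImpFactor k)) (R : Set (Fin k → Bool)) : Prop :=
  ∀ x, x ∈ R ↔ ∀ fac ∈ L, fac.eval x = true

/-- Membership in `IMP`: the relation is the conjunction of a positive number of factors of the
forms `Δ_0(x)`, `Δ_1(x)`, `Implies(x,y)`. -/
def inIMP {k : ℕ} (R : Set (Fin k → Bool)) : Prop :=
  ∃ L : List (ImpFactor k), L ≠ [] ∧ isFactorListFor L R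

/-- `f` has imp support when `R_f ∈ IMP`. -/
def hasImpSupport {k : ℕ} (f : Constraint k) : Prop := inIMP (relOf f)

/-- A factor list is imp-distinctive if no variable occurs both in a `Δ_c` factor and in an
`Implies` factor, and no factor `Implies(x,x)` occurs. -/
def impDistinctive {k : ℕ} (L : List (ImpFactor k)) : Prop :=
  (∀ i : Fin k, ¬ ((∃ c, ImpFactor.delta c i ∈ L) ∧
      (∃ j, ImpFactor.imp i j ∈ L ∨ ImpFactor.imp j i ∈ L))) ∧
  (∀ i : Fin k, ImpFactor.imp i i ∉ L)

/-- Factors of the forms `Δ_c(x_i)` or `EQ(x_i,x_j)`. -/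
inductive EqFactor (k : ℕ) where
  | delta (c : Bool) (i : Fin k)
  | eq (i j : Fin k)
deriving DecidableEq

/-- Evaluation of such a factor at an assignment. -/
def EqFactor.eval {k : ℕ} : EqFactor k → (Fin k → Bool) → Bool
  | .delta c i, x => x i == c
  | .eq i j, x => x i == x j

/-- `f` is in simple form: its representing Boolean matrix (rows indexed by `R_f`) has
no all-`0` column, no all-`1` column, and no two identical columns. -/
def simpleForm {k : ℕ} (f : Constraint k) : Prop :=
  (∀ i : Fin k, ∃ a, f a ≠ 0 ∧ a i = true) ∧
  (∀ i : Fin k, ∃ a, f a ≠ 0 ∧ a i = false) ∧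
  (∀ i j : Fin k, i ≠ j → ∃ a, f a ≠ 0 ∧ a i ≠ a j)

/-- A constraint of unspecified arity. -/
abbrev Ctr : Type := Σ k : ℕ, Constraint k

/-- T-constructibility of a constraint from a set `G` of constraints, by finitely many
applications of permutation, pinning, projection, linking, expansion, multiplication,
and normalization. -/
inductive TCon (G : Set Ctr) : Ctr → Prop where
  | base {c : Ctr} : c ∈ G → TCon G c
  | perm {k : ℕ} {g : Constraint k} (σ : Equiv.Perm (Fin k)) :
      TCon G ⟨k, g⟩ → TCon G ⟨k, fun x => g (fun i => x (σ i))⟩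
  | pinning {k : ℕ} {g : Constraint (k+1)} (i : Fin (k+1)) (c : Bool) :
      TCon G ⟨k+1, g⟩ → TCon G ⟨k, fun x => g (i.insertNth c x)⟩
  | proj {k : ℕ} {g : Constraint (k+1)} (i : Fin (k+1)) :
      TCon G ⟨k+1, g⟩ →
      TCon G ⟨k, fun x => g (i.insertNth false x) + g (i.insertNth true x)⟩
  | link {k : ℕ} {g : Constraint (k+1)} (i : Fin (k+1)) (j : Fin k) :
      TCon G ⟨k+1, g⟩ → TCon G ⟨k, fun x => g (i.insertNth (x j) x)⟩
  | expand {k : ℕ} {g : Constraint k} (i : Fin (k+1)) :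
      TCon G ⟨k, g⟩ → TCon G ⟨k+1, fun x => g (fun j => x (i.succAbove j))⟩
  | mul {k : ℕ} {g₁ g₂ : Constraint k} :
      TCon G ⟨k, g₁⟩ → TCon G ⟨k, g₂⟩ → TCon G ⟨k, fun x => g₁ x * g₂ x⟩
  | norm {k : ℕ} {g : Constraint k} (lam : ℂ) (hlam : lam ≠ 0) :
      TCon G ⟨k, g⟩ → TCon G ⟨k, fun x => lam * g x⟩

/-- T-constructibility using no projection operation. -/
inductive TConNoProj (G : Set Ctr) : Ctr → Prop where
  | base {c : Ctr} : c ∈ G → TConNoProj G c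
  | perm {k : ℕ} {g : Constraint k} (σ : Equiv.Perm (Fin k)) :
      TConNoProj G ⟨k, g⟩ → TConNoProj G ⟨k, fun x => g (fun i => x (σ i))⟩
  | pinning {k : ℕ} {g : Constraint (k+1)} (i : Fin (k+1)) (c : Bool) :
      TConNoProj G ⟨k+1, g⟩ → TConNoProj G ⟨k, fun x => g (i.insertNth c x)⟩
  | link {k : ℕ} {g : Constraint (k+1)} (i : Fin (k+1)) (j : Fin k) :
      TConNoProj G ⟨k+1, g⟩ → TConNoProj G ⟨k, fun x => g (i.insertNth (x j) x)⟩
  | expand {k : ℕ} {g : Constraint k} (i : Fin (k+1)) :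
      TConNoProj G ⟨k, g⟩ → TConNoProj G ⟨k+1, fun x => g (fun j => x (i.succAbove j))⟩
  | mul {k : ℕ} {g₁ g₂ : Constraint k} :
      TConNoProj G ⟨k, g₁⟩ → TConNoProj G ⟨k, g₂⟩ →
      TConNoProj G ⟨k, fun x => g₁ x * g₂ x⟩
  | norm {k : ℕ} {g : Constraint k} (lam : ℂ) (hlam : lam ≠ 0) :
      TConNoProj G ⟨k, g⟩ → TConNoProj G ⟨k, fun x => lam * g x⟩

/-- Pinning the `i`-th variable of `f` to the bit `c`. -/
def pinC {k : ℕ} (f : Constraint (k+1)) (i : Fin (k+1)) (c : Bool) : Constraint k :=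
  fun x => f (i.insertNth c x)

/-- `R_f` admits a good factor list: a factor list consisting only of `Implies` factors,
in which every variable is incident to at least one edge of the induced imp graph,
and whose imp graph has no (directed) cycle. -/
def hasGoodFactorList {k : ℕ} (f : Constraint k) : Prop :=
  ∃ L : List (ImpFactor k),
    isFactorListFor L (relOf f) ∧
    (∀ fac ∈ L, ∃ i j, fac = ImpFactor.imp i j) ∧
    (∀ i : Fin k, ∃ j, ImpFactor.imp i j ∈ L ∨ ImpFactor.imp j i ∈ L) ∧
    ¬ ∃ i : Fin k, Relation.TransGen (fun a b => ImpFactor.imp a b ∈ L) i i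

/-! On `{0,1}²` the points `01` and `10` have meet `00` and join `11`. Unary factors only see one
coordinate, where meet and join return one of their two arguments, and `Implies` is the relation
`≤`; hence the support of a product of such factors is closed under meet and join. So a product
which is nonzero at `01` and `10` is nonzero everywhere, and a binary constraint in `IM` must vanish
at `01` or `10`. Conversely, let `f(1,0) = 0`. If `f(0,1) ≠ 0`, then
`f(x,y) = f(x,1) f(0,y) / f(0,1) · Implies(x,y)`; if `f(0,1) = 0`, then `f` is supported on the
diagonal, which is cut out by `Implies(x,y) · Implies(y,x)`. A constraint vanishing at
`01` is reduced to this by swapping the variables. -/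

/-- The factorization condition in the definition of `IM`, without the requirement `f ∉ NZ`:
`inIM f` unfolds to `¬ inNZ f ∧ HasImpliesFactorization f`. -/
def HasImpliesFactorization {k : ℕ} (f : Constraint k) : Prop :=
  ∃ (l1 l2 : ℕ) (h : Fin l1 → Bool → ℂ) (j : Fin l1 → Fin k) (m n : Fin l2 → Fin k),
    1 ≤ l1 + l2 ∧ ∀ x, f x = (∏ i, h i (x (j i))) * ∏ i, IMPc (x (m i)) (x (n i))

theorem IMPc_ne_zero_iff_le {a b : Bool} : IMPc a b ≠ 0 ↔ a ≤ b := by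
  cases a <;> cases b <;> simp [IMPc]

namespace HasImpliesFactorization

variable {k l : ℕ} {f g : Constraint k}

theorem unary (h : Bool → ℂ) (i : Fin k) : HasImpliesFactorization fun x ↦ h (x i) :=
  ⟨1, 0, fun _ ↦ h, fun _ ↦ i, Fin.elim0, Fin.elim0, le_rfl, fun x ↦ by simp⟩

theorem implies (i j : Fin k) : HasImpliesFactorization fun x ↦ IMPc (x i) (x j) :=
  ⟨0, 1, Fin.elim0, Fin.elim0, fun _ ↦ i, fun _ ↦ j, le_rfl, fun x ↦ by simp⟩

theorem mul (hf : HasImpliesFactorization f) (hg : HasImpliesFactorization g) :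
    HasImpliesFactorization fun x ↦ f x * g x := by
  obtain ⟨p, q, h, j, m, n, hpq, hf⟩ := hf
  obtain ⟨p', q', h', j', m', n', -, hg⟩ := hg
  refine ⟨p + p', q + q', Fin.append h h', Fin.append j j', Fin.append m m', Fin.append n n',
    by lia, fun x ↦ ?_⟩
  simp only [hf, hg, Fin.prod_univ_add, Fin.append_left, Fin.append_right]
  ring

theorem comp (hf : HasImpliesFactorization f) (σ : Fin k → Fin l) :
    HasImpliesFactorization fun x : Fin l → Bool ↦ f (x ∘ σ) := by
  obtain ⟨p, q, h, j, m, n, hpq, hf⟩ := hf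
  exact ⟨p, q, h, σ ∘ j, σ ∘ m, σ ∘ n, hpq, fun x ↦ hf (x ∘ σ)⟩

theorem ne_zero_of_monotone_of_choice (hf : HasImpliesFactorization f) {op : Bool → Bool → Bool}
    (op_mono : ∀ {a b c d}, a ≤ c → b ≤ d → op a b ≤ op c d)
    (op_choice : ∀ a b, op a b = a ∨ op a b = b)
    {x y : Fin k → Bool} (hx : f x ≠ 0) (hy : f y ≠ 0) : f (fun i ↦ op (x i) (y i)) ≠ 0 := by
  obtain ⟨p, q, h, j, m, n, -, hf⟩ := hf
  simp only [hf, mul_ne_zero_iff, Finset.prod_ne_zero_iff, Finset.mem_univ, true_imp_iff,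
    IMPc_ne_zero_iff_le] at hx hy ⊢
  refine ⟨fun i ↦ ?_, fun i ↦ op_mono (hx.2 i) (hy.2 i)⟩
  obtain hop | hop := op_choice (x (j i)) (y (j i)) <;> rw [hop]
  exacts [hx.1 i, hy.1 i]

theorem inf_ne_zero (hf : HasImpliesFactorization f) {x y : Fin k → Bool} (hx : f x ≠ 0)
    (hy : f y ≠ 0) : f (x ⊓ y) ≠ 0 :=
  hf.ne_zero_of_monotone_of_choice inf_le_inf min_choice hx hy

theorem sup_ne_zero (hf : HasImpliesFactorization f) {x y : Fin k → Bool} (hx : f x ≠ 0)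
    (hy : f y ≠ 0) : f (x ⊔ y) ≠ 0 :=
  hf.ne_zero_of_monotone_of_choice sup_le_sup max_choice hx hy

end HasImpliesFactorization

theorem forall_fin_two_bool {P : (Fin 2 → Bool) → Prop} :
    (∀ x, P x) ↔
      (P ![false, false] ∧ P ![false, true]) ∧ P ![true, false] ∧ P ![true, true] := by
  simp only [Fin.forall_fin_succ_pi, Fin.forall_fin_zero_pi, Bool.forall_bool]
  rfl

section Binary

variable {f : Constraint 2}

theorem inNZ_iff_mul_ne_zero :
    inNZ f ↔ f ![false, false] * f ![true, true] ≠ 0 ∧ f ![false, true] * f ![true, false] ≠ 0 := by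
  rw [inNZ, forall_fin_two_bool, mul_ne_zero_iff, mul_ne_zero_iff]
  tauto

theorem HasImpliesFactorization.inNZ (hf : HasImpliesFactorization f)
    (h01 : f ![false, true] ≠ 0) (h10 : f ![true, false] ≠ 0) : inNZ f := by
  have inf_eq : (![false, true] ⊓ ![true, false] : Fin 2 → Bool) = ![false, false] := by decide
  have sup_eq : (![false, true] ⊔ ![true, false] : Fin 2 → Bool) = ![true, true] := by decide
  have h00 : f ![false, false] ≠ 0 := inf_eq ▸ hf.inf_ne_zero h01 h10
  have h11 : f ![true, true] ≠ 0 := sup_eq ▸ hf.sup_ne_zero h01 h10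
  exact forall_fin_two_bool.mpr ⟨⟨h00, h01⟩, h10, h11⟩

theorem hasImpliesFactorization_of_apply_true_false_eq_zero (h10 : f ![true, false] = 0) :
    HasImpliesFactorization f := by
  by_cases h01 : f ![false, true] = 0
  · have f_eq : f = fun x ↦ f ![x 0, x 0] * (IMPc (x 0) (x 1) * IMPc (x 1) (x 0)) :=
      funext (forall_fin_two_bool.mpr (by simp [IMPc, h01, h10]))
    rw [f_eq]
    exact .mul (.unary (fun a ↦ f ![a, a]) 0) (.mul (.implies 0 1) (.implies 1 0))
  · have f_eq : f = fun x ↦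
        f ![x 0, true] / f ![false, true] * (f ![false, x 1] * IMPc (x 0) (x 1)) :=
      funext (forall_fin_two_bool.mpr (by simp [IMPc, h01, h10]))
    rw [f_eq]
    exact .mul (.unary (fun a ↦ f ![a, true] / f ![false, true]) 0)
      (.mul (.unary (fun b ↦ f ![false, b]) 1) (.implies 0 1))

theorem hasImpliesFactorization_of_apply_false_true_eq_zero (h01 : f ![false, true] = 0) :
    HasImpliesFactorization f := by
  let swap : Fin 2 → Fin 2 := ![1, 0]
  have swap_swap : swap ∘ swap = id := by decide
  have factorization_swap : HasImpliesFactorization fun x ↦ f (x ∘ swap) :=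
    hasImpliesFactorization_of_apply_true_false_eq_zero <| by
      rwa [show ![true, false] ∘ swap = ![false, true] by decide]
  simpa [Function.comp_assoc, swap_swap] using factorization_swap.comp swap

theorem inIM_iff_mul_eq_zero : inIM f ↔ f ![false, true] * f ![true, false] = 0 := by
  refine ⟨fun ⟨not_inNZ, (hf : HasImpliesFactorization f)⟩ ↦ ?_,
    fun h ↦ ⟨fun hNZ ↦ mul_ne_zero (hNZ _) (hNZ _) h, ?_⟩⟩
  · by_contra h
    exact not_inNZ (hf.inNZ (left_ne_zero_of_mul h) (right_ne_zero_of_mul h))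
  · exact (mul_eq_zero.mp h).elim hasImpliesFactorization_of_apply_false_true_eq_zero
      hasImpliesFactorization_of_apply_true_false_eq_zero

end Binary

/-- For a binary constraint `f` not identically zero,
`f ∉ IM ∪ NZ` iff `f(0,0)·f(1,1) = 0` and `f(0,1)·f(1,0) ≠ 0`. -/
theorem stmt16 (f : Constraint 2) (hf : ∃ x, f x ≠ 0) :
    ¬ (inIM f ∨ inNZ f) ↔
      (f ![false, false] * f ![true, true] = 0 ∧ f ![false, true] * f ![true, false] ≠ 0) := by
  rw [inIM_iff_mul_eq_zero, inNZ_iff_mul_ne_zero]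
  tauto
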